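/- Let $i \ge 2$ and $n \ge 1$ be integers. With $B''_1$ the unique integer satisfying $5 B''_1 \equiv (-1)^{i+1} n L_{i-2} \pmod{L_i}$, $1 \le B''_1 \le L_i$; $C''_2$ the unique integer satisfying $5 C''_2 \equiv (-1)^{i+1} n L_i \pmod{L_{i+1}}$, $1 \le C''_2 \le L_{i+1}$; $A''_3$ the unique integer satisfying $5 A''_3 \equiv (-1)^{i+1} n L_{i+1} \pmod{L_{i+2}}$, $1 \le A''_3 \le L_{i+2}$; and $N_3 = n(n+L_i+L_{i+1}+L_{i+2}) + L_{i+2}L_{i+1}B''_1(L_i+1-(B''_1-1)) + L_iL_{i+2}C''_2(L_{i+1}+1-(C''_2-1)) + L_{i+1}L_iA''_3(L_{i+2}+1-(L_{i+2}-1)(A''_3-1))$, the integer $2 L_i L_{i+1} L_{i+2}$ divides $N_3$. -/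

import Mathlib

/-!
Write `a, b, c = L_i, L_{i+1}, L_{i+2}` and `s = (-1)^(i+1)`. Cassini's identity for Lucas numbers
reads `b² - ab - a² = 5s` (`lucas_cassini`). Together with `gcd(a, b) = 1` it shows that
`a, b, c` are prime to `5`. They are also pairwise coprime, and exactly one of them is even because
`c = a + b`.

Modulo each of `a, b, c`, only one of the three quadratic terms of `N₃` survives. Multiplying by `5`
and substituting the congruence that defines `B₁`, `C₂` or `A₃`, Cassini's identity makes `5 N₃`
vanish. The computation gives an explicit cofactor `Q` with `5 N₃ = m Q` for `m = a, b, c`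
(`dvd_N_a`, `dvd_N_b`, `dvd_N_c`). When `m` is even, the other two numbers are odd, and reading `Q`
modulo `2` shows that it is even, so `2m ∣ N₃`. Coprimality combines these divisibilities into
`2abc ∣ N₃`.
-/

/-- The Lucas numbers: `L_0 = 2`, `L_1 = 1`, `L_{n+2} = L_{n+1} + L_n`. -/
def lucas : ℕ → ℕ
  | 0 => 2
  | 1 => 1
  | n + 2 => lucas (n + 1) + lucas n

/-- Cassini's identity for Lucas numbers. -/
theorem lucas_cassini (i : ℕ) :
    (lucas (i + 1) : ℤ) ^ 2 - lucas i * lucas (i + 1) - (lucas i : ℤ) ^ 2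
      = 5 * (-1) ^ (i + 1) := by
  induction i with
  | zero => simp [lucas]
  | succ k ih =>
    have h : (lucas (k + 1 + 1) : ℤ) = lucas (k + 1) + lucas k := by simp [lucas]
    rw [h, pow_succ]
    linear_combination -ih

theorem lucas_isCoprime (i : ℕ) : IsCoprime (lucas i : ℤ) (lucas (i + 1)) := by
  induction i with
  | zero => simp [lucas, isCoprime_one_right]
  | succ k ih =>
    have h : (lucas (k + 1 + 1) : ℤ) = lucas k + 1 * lucas (k + 1) := by
      simp [lucas, add_comm]
    rw [h]
    exact ih.symm.add_mul_right_right 1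

/-- Cancels the factor `5` in `5 N = m Q`, keeping track of the extra factor `2` when `m` is
even. -/
theorem dvd_of_five_mul {m N Q : ℤ} (h5 : IsCoprime 5 m) (h : 5 * N = m * Q)
    (hQ : Even m → Even Q) : m ∣ N ∧ (Even m → 2 * m ∣ N) := by
  refine ⟨h5.symm.dvd_of_dvd_mul_left ⟨Q, h⟩, fun hm => ?_⟩
  obtain ⟨q, hq⟩ := hQ hm
  have h52 : IsCoprime (5 : ℤ) (2 * m) := IsCoprime.mul_right ⟨1, -2, by norm_num⟩ h5
  exact h52.symm.dvd_of_dvd_mul_left ⟨q, by rw [h, hq]; ring⟩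

/-- The integer `N₃` for the triple `(a, b, a + b)`. -/
def tripletN (a b n B C A : ℤ) : ℤ :=
  n * (n + a + b + (a + b)) + (a + b) * b * B * (a + 1 - (B - 1))
    + a * (a + b) * C * (b + 1 - (C - 1))
    + b * a * A * ((a + b) + 1 - ((a + b) - 1) * (A - 1))

section

variable {a b n B C A s k : ℤ}

theorem not_even_of_sq_eq_one (hs : s ^ 2 = 1) : ¬ Even s := by
  intro h
  have : Even (s ^ 2) := h.pow_of_ne_zero two_ne_zero
  rw [hs] at this
  exact absurd this (by decide)

/-- Divisibility by `a`: the certificate replaces `b²` by `5s + ab + a²` in the coefficient of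
`B (a + 2 - B)` and then `5 B` by its value. For `a` even, the cofactor has the parity of
`B + n`, and `hB` gives `B ≡ n` modulo `2`. -/
theorem dvd_N_a (hs : s ^ 2 = 1) (hc : b ^ 2 - a * b - a ^ 2 = 5 * s)
    (h5 : IsCoprime 5 a) (hpar : Even a → ¬ Even b) (hB : 5 * B = -(s * n * b) + k * a) :
    a ∣ tripletN a b n B C A ∧ (Even a → 2 * a ∣ tripletN a b n B C A) := by
  apply dvd_of_five_mul (Q := 10 * n + 5 * (2 * b + a) * (B * (a + 2 - B))
      + 5 * (a + b) * (C * (b + 2 - C)) + 5 * b * (A * (2 * (a + b) + A - (a + b) * A))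
      + 25 * s * B + 10 * s * k - s * n ^ 2 * (a + b) + 2 * n * b * k - s * k ^ 2 * a) h5
  · unfold tripletN
    linear_combination (5 * B * (a + 2 - B) - s * n ^ 2) * hc
      + (10 * s - s * (5 * B + (-(s * n * b) + k * a))) * hB
      + (-10 * n * b + 2 * n * b * k * a - 5 * n ^ 2 - s * n ^ 2 * b ^ 2) * hs
  · intro ha
    have hb := hpar ha
    have hs' := not_even_of_sq_eq_one hs
    have h : Even (5 * B) ↔ Even (-(s * n * b) + k * a) := by rw [hB]
    have e5 : ¬ Even (5 : ℤ) := by decide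
    have e25 : ¬ Even (25 : ℤ) := by decide
    have e10 : Even (10 : ℤ) := by decide
    simp [-Int.not_even_iff_odd, Int.even_add, Int.even_sub, Int.even_mul, even_neg,
      Int.even_pow, ha, hb, hs', e5, e25, e10] at h ⊢
    by_cases hn : Even n <;> by_cases hk : Even k <;> by_cases h1 : Even A <;>
      by_cases h2 : Even B <;> by_cases h3 : Even C <;> simp_all [-Int.not_even_iff_odd]

/-- Divisibility by `b`: here `a (a + b) ≡ -5s` modulo `b` is the coefficient of `C (b + 2 - C)`.
For `b` even, the cofactor has the parity of `C + n`. -/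
theorem dvd_N_b (hs : s ^ 2 = 1) (hc : b ^ 2 - a * b - a ^ 2 = 5 * s)
    (h5 : IsCoprime 5 b) (hpar : Even b → ¬ Even a) (hC : 5 * C = s * n * a + k * b) :
    b ∣ tripletN a b n B C A ∧ (Even b → 2 * b ∣ tripletN a b n B C A) := by
  apply dvd_of_five_mul (Q := 10 * n + 5 * (a + b) * (B * (a + 2 - B))
      + 5 * a * (A * (2 * (a + b) + A - (a + b) * A)) + 5 * b * (C * (b + 2 - C))
      - 25 * s * C - 10 * s * k + s * n ^ 2 * (b - a) + 2 * n * a * k + s * k ^ 2 * b) h5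
  · unfold tripletN
    linear_combination (-5 * C * (b + 2 - C) - s * n ^ 2) * hc
      + (-10 * s + s * (5 * C + (s * n * a + k * b))) * hC
      + (-10 * n * a + 2 * n * a * k * b - 5 * n ^ 2 + s * n ^ 2 * a ^ 2) * hs
  · intro hb
    have ha := hpar hb
    have hs' := not_even_of_sq_eq_one hs
    have h : Even (5 * C) ↔ Even (s * n * a + k * b) := by rw [hC]
    have e5 : ¬ Even (5 : ℤ) := by decide
    have e25 : ¬ Even (25 : ℤ) := by decide
    have e10 : Even (10 : ℤ) := by decide
    simp [-Int.not_even_iff_odd, Int.even_add, Int.even_sub, Int.even_mul, Int.even_pow,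
      ha, hb, hs', e5, e25, e10] at h ⊢
    by_cases hn : Even n <;> by_cases hk : Even k <;> by_cases h1 : Even A <;>
      by_cases h2 : Even B <;> by_cases h3 : Even C <;> simp_all [-Int.not_even_iff_odd]

/-- Divisibility by `a + b`: here `ab ≡ -5s` modulo `a + b` is the coefficient of the quadratic
term in `A`. For `a + b` even, both `a` and `b` are odd, the cofactor has the parity of `A + n`,
and `hA` gives `A ≡ n` modulo `2`. -/
theorem dvd_N_c (hs : s ^ 2 = 1) (hc : b ^ 2 - a * b - a ^ 2 = 5 * s)
    (h5 : IsCoprime 5 (a + b)) (hpar : Even a → ¬ Even b)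
    (hA : 5 * A = s * n * b + k * (a + b)) :
    a + b ∣ tripletN a b n B C A ∧ (Even (a + b) → 2 * (a + b) ∣ tripletN a b n B C A) := by
  apply dvd_of_five_mul (Q := 10 * n + 5 * b * (B * (a + 2 - B)) + 5 * a * (C * (b + 2 - C))
      + 5 * (b - a) * (A * (2 * (a + b) + A - (a + b) * A))
      - 25 * s * (A * (2 - A)) - s * n ^ 2 * a - 2 * n * b * k - s * k ^ 2 * (a + b)) h5
  · unfold tripletN
    linear_combination (-5 * A * (2 * (a + b) + A - (a + b) * A) - s * n ^ 2) * hc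
      - s * (5 * A + (s * n * b + k * (a + b))) * hA
      + (-2 * n * b * k * (a + b) - 5 * n ^ 2 - s * n ^ 2 * b ^ 2) * hs
  · intro hab
    have hs' := not_even_of_sq_eq_one hs
    have h : Even (5 * A) ↔ Even (s * n * b + k * (a + b)) := by rw [hA]
    have e5 : ¬ Even (5 : ℤ) := by decide
    have e25 : ¬ Even (25 : ℤ) := by decide
    have e10 : Even (10 : ℤ) := by decide
    simp [-Int.not_even_iff_odd, Int.even_add, Int.even_sub, Int.even_mul, Int.even_pow, hs',
      e5, e25, e10] at h hab ⊢
    by_cases hn : Even n <;> by_cases hk : Even k <;> by_cases h1 : Even A <;>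
      by_cases h2 : Even B <;> by_cases h3 : Even C <;> simp_all [-Int.not_even_iff_odd]

end

/-- With the notation of the Lucas triplet theorem, `2*L_i*L_{i+1}*L_{i+2}`
divides `N_3`. -/
theorem lucas_N3_divisibility
    (i n : ℕ) (hi : 2 ≤ i) (hn : 1 ≤ n)
    (B1 C2 A3 : ℕ)
    (hB1 : 5 * (B1 : ℤ) ≡ (-1) ^ (i + 1) * n * lucas (i - 2) [ZMOD (lucas i : ℤ)])
    (hB1r : 1 ≤ B1 ∧ B1 ≤ lucas i)
    (hC2 : 5 * (C2 : ℤ) ≡ (-1) ^ (i + 1) * n * lucas i [ZMOD (lucas (i + 1) : ℤ)])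
    (hC2r : 1 ≤ C2 ∧ C2 ≤ lucas (i + 1))
    (hA3 : 5 * (A3 : ℤ) ≡ (-1) ^ (i + 1) * n * lucas (i + 1) [ZMOD (lucas (i + 2) : ℤ)])
    (hA3r : 1 ≤ A3 ∧ A3 ≤ lucas (i + 2))
    (N3 : ℤ)
    (hN3 : N3 = (n : ℤ) * ((n : ℤ) + lucas i + lucas (i + 1) + lucas (i + 2))
        + (lucas (i + 2) : ℤ) * lucas (i + 1) * B1
            * ((lucas i : ℤ) + 1 - ((B1 : ℤ) - 1))
        + (lucas i : ℤ) * lucas (i + 2) * C2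
            * ((lucas (i + 1) : ℤ) + 1 - ((C2 : ℤ) - 1))
        + (lucas (i + 1) : ℤ) * lucas i * A3
            * ((lucas (i + 2) : ℤ) + 1 - ((lucas (i + 2) : ℤ) - 1) * ((A3 : ℤ) - 1))) :
    (2 * (lucas i : ℤ) * lucas (i + 1) * lucas (i + 2)) ∣ N3 := by
  obtain ⟨j, rfl⟩ : ∃ j, i = j + 2 := ⟨i - 2, by omega⟩
  have hs : ((-1 : ℤ) ^ (j + 2 + 1)) ^ 2 = 1 := by rw [← pow_mul, mul_comm, pow_mul]; simp
  have hc := lucas_cassini (j + 2)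
  have hcop := lucas_isCoprime (j + 2)
  have hL : (lucas (j + 2 + 2) : ℤ) = lucas (j + 2) + lucas (j + 2 + 1) := by
    simp [lucas]; ring
  have hL0 : (lucas j : ℤ) = 2 * lucas (j + 2) - lucas (j + 2 + 1) := by
    simp [lucas]; ring
  rw [Nat.add_sub_cancel, hL0] at hB1
  rw [hL] at hA3 hN3 ⊢
  generalize (-1 : ℤ) ^ (j + 2 + 1) = s at *
  generalize (lucas (j + 2) : ℤ) = a at *
  generalize (lucas (j + 2 + 1) : ℤ) = b at *
  obtain ⟨k₁, hk₁⟩ := hB1.symm.dvd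
  obtain ⟨k₂, hk₂⟩ := hC2.symm.dvd
  obtain ⟨k₃, hk₃⟩ := hA3.symm.dvd
  -- A prime dividing one of `a, b, a + b` and `b² - ab - a²` divides both `a` and `b`.
  have h5p : Prime (5 : ℤ) := by norm_num
  have hnot : ¬ ((5 : ℤ) ∣ a ∧ (5 : ℤ) ∣ b) := fun h =>
    h5p.not_isUnit (hcop.isUnit_of_dvd' h.1 h.2)
  have h5a : IsCoprime 5 a := (h5p.coprime_iff_not_dvd).2 fun ⟨x, hx⟩ =>
    hnot ⟨⟨x, hx⟩, h5p.dvd_of_dvd_pow (n := 2) ⟨s + x * b + x * a, by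
      linear_combination hc + (b + a) * hx⟩⟩
  have h5b : IsCoprime 5 b := (h5p.coprime_iff_not_dvd).2 fun ⟨x, hx⟩ =>
    hnot ⟨h5p.dvd_of_dvd_pow (n := 2) ⟨-s + x * b - x * a, by
      linear_combination -hc + (b - a) * hx⟩, ⟨x, hx⟩⟩
  have h5c : IsCoprime 5 (a + b) := (h5p.coprime_iff_not_dvd).2 fun ⟨x, hx⟩ => by
    have hb : (5 : ℤ) ∣ b := h5p.dvd_of_dvd_pow (n := 2) ⟨s + x * a, by
      linear_combination hc + a * hx⟩
    exact hnot ⟨(dvd_add_left hb).1 ⟨x, hx⟩, hb⟩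
  have hpar : Even a → ¬ Even b := fun ha hb =>
    Int.prime_two.not_isUnit (hcop.isUnit_of_dvd' ha.two_dvd hb.two_dvd)
  have hN : N3 = tripletN a b n B1 C2 A3 := by rw [hN3, tripletN]
  obtain ⟨ha1, ha2⟩ := dvd_N_a (n := n) (B := B1) (C := C2) (A := A3) (k := k₁ + 2 * s * n)
    hs hc h5a hpar (by linear_combination hk₁)
  obtain ⟨hb1, hb2⟩ := dvd_N_b (n := n) (B := B1) (C := C2) (A := A3) (k := k₂)
    hs hc h5b (fun h h' => hpar h' h) (by linear_combination hk₂)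
  obtain ⟨hc1, hc2⟩ := dvd_N_c (n := n) (B := B1) (C := C2) (A := A3) (k := k₃)
    hs hc h5c hpar (by linear_combination hk₃)
  rw [← hN] at ha1 ha2 hb1 hb2 hc1 hc2
  have hac : IsCoprime a (a + b) := by simpa [add_comm] using hcop.add_mul_left_right 1
  have hbc : IsCoprime b (a + b) := by simpa using hcop.symm.add_mul_left_right 1
  have two_cop : ∀ {x : ℤ}, ¬ Even x → IsCoprime 2 x := fun hx =>
    (Int.prime_two.coprime_iff_not_dvd).2 fun h => hx (even_iff_two_dvd.2 h)
  -- The factor `2` is absorbed by the even member of the triple.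
  by_cases ea : Even a
  · have eb := hpar ea
    have ec : ¬ Even (a + b) := by rw [Int.even_add]; tauto
    have h1 : IsCoprime (2 * a) b := (two_cop eb).mul_left hcop
    have h2 : IsCoprime (2 * a * b) (a + b) := ((two_cop ec).mul_left hac).mul_left hbc
    exact h2.mul_dvd (h1.mul_dvd (ha2 ea) hb1) hc1
  · by_cases eb : Even b
    · have ec : ¬ Even (a + b) := by rw [Int.even_add]; tauto
      have h1 : IsCoprime a (2 * b) := (two_cop ea).symm.mul_right hcop
      have h2 : IsCoprime (a * (2 * b)) (a + b) := hac.mul_left ((two_cop ec).mul_left hbc)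
      rw [show 2 * a * b * (a + b) = a * (2 * b) * (a + b) by ring]
      exact h2.mul_dvd (h1.mul_dvd ha1 (hb2 eb)) hc1
    · have ec : Even (a + b) := by rw [Int.even_add]; tauto
      have h2 : IsCoprime (a * b) (2 * (a + b)) :=
        ((two_cop ea).mul_right (two_cop eb)).symm.mul_right (hac.mul_left hbc)
      rw [show 2 * a * b * (a + b) = a * b * (2 * (a + b)) by ring]
      exact h2.mul_dvd (hcop.mul_dvd ha1 hb1) (hc2 ec)
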